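/- Let n ≥ 3 and f ∈ C_0^∞(ℝ^n). Then ((n-2)^2/4) ∫_{ℝ^n} |x|^{-2} |f(x)|^2 dx ≤ ∫_{ℝ^n} |∇f(x)|^2 dx. -/

import Mathlib

open MeasureTheory

/-- Integration by parts against the Euler field. -/
lemma euler_ibp (n : ℕ) (h : EuclideanSpace ℝ (Fin n) → ℝ)
    (hh : ContDiff ℝ 1 h) (hs : HasCompactSupport h) :
    ∫ x, fderiv ℝ h x x = - ((n : ℝ) * ∫ x, h x) := by
  have hD : Continuous (fderiv ℝ h) := hh.continuous_fderiv (by norm_num)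
  have key : ∀ i : Fin n,
      Integrable (fun x => fderiv ℝ h x (EuclideanSpace.single i 1) * x i) ∧
      ∫ x, fderiv ℝ h x (EuclideanSpace.single i 1) * x i = - ∫ x, h x := by
    intro i
    let p : EuclideanSpace ℝ (Fin n) →L[ℝ] ℝ := EuclideanSpace.proj i
    have hp : ∀ x, p x = x i := fun x => rfl
    have hfp : ∀ x, fderiv ℝ p x = p := fun x => p.fderiv
    have hc : Continuous (fun x : EuclideanSpace ℝ (Fin n) => x i) := p.continuous
    have i1 : Integrable (fun x => fderiv ℝ h x (EuclideanSpace.single i 1) * p x) := by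
      apply Continuous.integrable_of_hasCompactSupport
      · exact (hD.clm_apply continuous_const).mul hc
      · exact (hs.fderiv_apply (𝕜 := ℝ) _).mul_right
    have e1 : (fun x => h x * fderiv ℝ p x (EuclideanSpace.single i 1)) = h := by
      funext x
      rw [hfp, hp]
      simp
    have i2 : Integrable (fun x => h x * fderiv ℝ p x (EuclideanSpace.single i 1)) := by
      rw [e1]
      exact hh.continuous.integrable_of_hasCompactSupport hs
    have i3 : Integrable (fun x => h x * p x) :=
      (hh.continuous.mul hc).integrable_of_hasCompactSupport hs.mul_right
    have := integral_mul_fderiv_eq_neg_fderiv_mul_of_integrable (μ := volume) i1 i2 i3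
      (fun x _ => hh.differentiable (by norm_num) x) (fun x _ => p.differentiableAt)
    rw [e1] at this
    refine ⟨i1, ?_⟩
    rw [this, neg_neg]
    rfl
  have e : ∀ x : EuclideanSpace ℝ (Fin n), fderiv ℝ h x x
      = ∑ i, fderiv ℝ h x (EuclideanSpace.single i 1) * x i := by
    intro x
    have hx : x = ∑ i, x i • EuclideanSpace.single i (1 : ℝ) := by
      have := (EuclideanSpace.basisFun (Fin n) ℝ).sum_repr x
      simpa using this.symm
    generalize fderiv ℝ h x = L
    conv_lhs => rw [hx]
    rw [map_sum]
    simp [mul_comm]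
  simp_rw [e]
  rw [integral_finsetSum _ (fun i _ => (key i).1)]
  simp [fun i => (key i).2]

lemma hardy_deriv (n : ℕ) (f : EuclideanSpace ℝ (Fin n) → ℂ)
    (hf : ContDiff ℝ 1 f) (ε : ℝ) (hε : 0 < ε) (x : EuclideanSpace ℝ (Fin n)) :
    fderiv ℝ (fun x => (‖x‖ ^ 2 + ε)⁻¹ * ‖f x‖ ^ 2) x x
      = (‖x‖ ^ 2 + ε)⁻¹ * (2 * inner ℝ (f x) (fderiv ℝ f x x))
      - 2 * ‖x‖ ^ 2 * ((‖x‖ ^ 2 + ε)⁻¹) ^ 2 * ‖f x‖ ^ 2 := by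
  have hpos : 0 < ‖x‖ ^ 2 + ε := by positivity
  have d1 := ((hf.differentiable (by norm_num) x).hasFDerivAt).norm_sq
  have d2 := ((hasFDerivAt_id (𝕜 := ℝ) x).norm_sq).add_const ε
  have d3 := (hasDerivAt_inv hpos.ne').comp_hasFDerivAt x d2
  have d4 := d3.mul d1
  have d5 := d4.fderiv
  have e : (fun x : EuclideanSpace ℝ (Fin n) => (‖x‖ ^ 2 + ε)⁻¹ * ‖f x‖ ^ 2)
      = ((fun y : ℝ => y⁻¹) ∘ fun x => ‖id x‖ ^ 2 + ε) * fun x => ‖f x‖ ^ 2 := by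
    funext y
    simp
  rw [e]
  erw [d5]
  simp
  ring

lemma hardy_real (m a D r I ε : ℝ) (hm : 3 ≤ m) (hε : 0 < ε)
    (hI : -(a * (D * r)) ≤ I) :
    (m - 2) ^ 2 / 4 * ((r ^ 2 + ε)⁻¹ * a ^ 2) ≤ D ^ 2 + (m - 2) / 2 *
      (m * ((r ^ 2 + ε)⁻¹ * a ^ 2) + ((r ^ 2 + ε)⁻¹ * (2 * I)
        - 2 * r ^ 2 * ((r ^ 2 + ε)⁻¹) ^ 2 * a ^ 2)) := by
  have hpos : 0 < r ^ 2 + ε := by positivity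
  have hw0 : 0 < (r ^ 2 + ε)⁻¹ := inv_pos.mpr hpos
  have hw1 : (r ^ 2 + ε)⁻¹ * (r ^ 2 + ε) = 1 := inv_mul_cancel₀ hpos.ne'
  generalize (r ^ 2 + ε)⁻¹ = w at *
  have hwr : w * r ^ 2 ≤ 1 := by nlinarith
  obtain ⟨c, rfl⟩ : ∃ c : ℝ, m = 2 * c + 2 := ⟨(m - 2) / 2, by ring⟩
  have hc0 : 0 < c := by linarith
  have s1 : 0 ≤ (D - c * (a * r * w)) ^ 2 := sq_nonneg _
  have s2 : 0 ≤ (2 * c * w) * (I + a * (D * r)) :=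
    mul_nonneg (by positivity) (by linarith)
  have s3 : 0 ≤ (2 * c + c ^ 2) * a ^ 2 * w * (1 - w * r ^ 2) :=
    mul_nonneg (by positivity) (by linarith)
  linarith

lemma hardy_eps (n : ℕ) (hn : 3 ≤ n) (f : EuclideanSpace ℝ (Fin n) → ℂ)
    (hf : ContDiff ℝ 1 f) (hsupp : HasCompactSupport f) (ε : ℝ) (hε : 0 < ε) :
    ((n : ℝ) - 2) ^ 2 / 4 * ∫ x : EuclideanSpace ℝ (Fin n), (‖x‖ ^ 2 + ε)⁻¹ * ‖f x‖ ^ 2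
      ≤ ∫ x : EuclideanSpace ℝ (Fin n), ‖fderiv ℝ f x‖ ^ 2 := by
  have hn' : (3 : ℝ) ≤ n := by exact_mod_cast hn
  have hpos : ∀ x : EuclideanSpace ℝ (Fin n), 0 < ‖x‖ ^ 2 + ε := fun x => by positivity
  obtain ⟨h, hdef⟩ : ∃ h : EuclideanSpace ℝ (Fin n) → ℝ,
      h = fun x => (‖x‖ ^ 2 + ε)⁻¹ * ‖f x‖ ^ 2 := ⟨_, rfl⟩
  rw [← hdef]
  have hD : Continuous (fderiv ℝ f) := hf.continuous_fderiv (by norm_num)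
  have hh : ContDiff ℝ 1 h := by
    rw [hdef]
    exact (((contDiff_norm_sq ℝ).add contDiff_const).inv (fun x => (hpos x).ne')).mul (hf.norm_sq ℝ)
  have hs2 : HasCompactSupport (fun x => ‖f x‖ ^ 2) :=
    hsupp.comp_left (g := fun z : ℂ => ‖z‖ ^ 2) (by simp)
  have hs : HasCompactSupport h := by
    rw [hdef]
    exact hs2.mul_left
  have hi : Integrable h := hh.continuous.integrable_of_hasCompactSupport hs
  have hsn : HasCompactSupport (fun x => ‖fderiv ℝ f x‖) := (hsupp.fderiv (𝕜 := ℝ)).norm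
  have hDi : Integrable (fun x => ‖fderiv ℝ f x‖ ^ 2) := by
    simp only [pow_two]
    exact (hD.norm.mul hD.norm).integrable_of_hasCompactSupport hsn.mul_right
  have hEi : Integrable (fun x => fderiv ℝ h x x) := by
    apply Continuous.integrable_of_hasCompactSupport
    · exact (hh.continuous_fderiv (by norm_num)).clm_apply continuous_id
    · apply (hs.fderiv (𝕜 := ℝ)).mono
      intro x hx
      contrapose! hx
      simp only [Function.mem_support, not_not] at hx ⊢
      simp [hx]
  have pt : ∀ x, ((n : ℝ) - 2) ^ 2 / 4 * h x
      ≤ ‖fderiv ℝ f x‖ ^ 2 + ((n : ℝ) - 2) / 2 * (n * h x + fderiv ℝ h x x) := by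
    intro x
    rw [hdef, hardy_deriv n f hf ε hε x]
    have hc := abs_real_inner_le_norm (f x) (fderiv ℝ f x x)
    have hop := mul_le_mul_of_nonneg_left ((fderiv ℝ f x).le_opNorm x) (norm_nonneg (f x))
    have := neg_abs_le (inner ℝ (f x) (fderiv ℝ f x x))
    exact hardy_real n ‖f x‖ ‖fderiv ℝ f x‖ ‖x‖ _ ε hn' hε (by linarith)
  have hQ : Integrable (fun x => ((n : ℝ) - 2) / 2 * (n * h x + fderiv ℝ h x x)) :=
    ((hi.const_mul _).add hEi).const_mul _
  have hI : ∫ x, ((n : ℝ) - 2) ^ 2 / 4 * h x ≤ ∫ x, (‖fderiv ℝ f x‖ ^ 2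
      + ((n : ℝ) - 2) / 2 * (n * h x + fderiv ℝ h x x)) :=
    integral_mono (hi.const_mul _)
      (hDi.add hQ) pt
  rw [integral_const_mul, integral_add hDi hQ,
    integral_const_mul, integral_add (hi.const_mul _) hEi, integral_const_mul,
    euler_ibp n h hh hs] at hI
  simpa using hI

/-- Hardy's inequality: for `n ≥ 3` and `f ∈ C₀^∞(ℝⁿ)`,
`((n-2)²/4) ∫ |x|⁻² |f(x)|² dx ≤ ∫ |∇f(x)|² dx`. -/
theorem stmt3 (n : ℕ) (hn : 3 ≤ n) (f : EuclideanSpace ℝ (Fin n) → ℂ)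
    (hf : ContDiff ℝ (⊤ : ℕ∞) f) (hsupp : HasCompactSupport f) :
    ((n : ℝ) - 2) ^ 2 / 4 *
        ∫ x : EuclideanSpace ℝ (Fin n), ‖x‖⁻¹ ^ 2 * ‖f x‖ ^ 2
      ≤ ∫ x : EuclideanSpace ℝ (Fin n), ‖fderiv ℝ f x‖ ^ 2 := by
  have hf1 : ContDiff ℝ 1 f := hf.of_le (by exact_mod_cast le_top)
  by_cases hint : Integrable
      (fun x : EuclideanSpace ℝ (Fin n) => ‖x‖⁻¹ ^ 2 * ‖f x‖ ^ 2)
  swap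
  · rw [integral_undef hint, mul_zero]
    exact integral_nonneg (fun x => by positivity)
  have : Nonempty (Fin n) := ⟨⟨0, by omega⟩⟩
  have hne : ∀ᵐ x : EuclideanSpace ℝ (Fin n), x ≠ 0 := Measure.ae_ne volume 0
  let e : ℕ → ℝ := fun k => 1 / ((k : ℝ) + 1)
  have he : ∀ k, 0 < e k := fun k => by positivity
  have hlim : Filter.Tendsto
      (fun k => ∫ x : EuclideanSpace ℝ (Fin n), (‖x‖ ^ 2 + e k)⁻¹ * ‖f x‖ ^ 2) Filter.atTop
      (nhds (∫ x : EuclideanSpace ℝ (Fin n), ‖x‖⁻¹ ^ 2 * ‖f x‖ ^ 2)) := by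
    apply tendsto_integral_of_dominated_convergence _ _ hint
    · intro k
      filter_upwards [hne] with x hx
      have hx' : 0 < ‖x‖ := norm_pos_iff.mpr hx
      have := he k
      rw [Real.norm_of_nonneg (by positivity), inv_pow]
      gcongr
      linarith
    · filter_upwards [hne] with x hx
      have hx' : 0 < ‖x‖ := norm_pos_iff.mpr hx
      have h1 : Filter.Tendsto (fun k => ‖x‖ ^ 2 + e k) Filter.atTop (nhds (‖x‖ ^ 2 + 0)) :=
        tendsto_one_div_add_atTop_nhds_zero_nat.const_add _
      rw [add_zero] at h1
      rw [inv_pow]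
      exact (h1.inv₀ (by positivity)).mul_const _
    · intro k
      have hp : ∀ x : EuclideanSpace ℝ (Fin n), ‖x‖ ^ 2 + e k ≠ 0 := fun x => by
        have := he k
        positivity
      exact ((((continuous_norm.pow 2).add continuous_const).inv₀ hp).mul
        (hf.continuous.norm.pow 2)).aestronglyMeasurable
  exact le_of_tendsto (hlim.const_mul _)
    (Filter.Eventually.of_forall fun k => hardy_eps n hn f hf1 hsupp (e k) (he k))
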